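/- Under the Abaffian recursion, for all indices 1 ≤ j ≤ i ≤ m one has H_{i+1}ᵀ wⱼ = 0; that is, the vectors w₁,…,w_i lie in the null space of the transpose of the (i+1)-st Abaffian. -/

import Mathlib

open Matrix

section AbaffianUpdate

variable {K κ ι : Type*} [Field K] [Fintype κ] [Fintype ι]

/-- The Abaffian update of `H` along the direction `u` (the vector `Aᵀ vᵢ` of the recursion) with
parameter `w`, also known as Wedderburn's rank-reduction formula. The matrix `H` may be
rectangular. If `wᵀ H u = 0`, the division convention makes the update return `H` itself. -/
def abaffianUpdate (H : Matrix κ ι K) (u : ι → K) (w : κ → K) : Matrix κ ι K :=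
  H - (w ⬝ᵥ (H *ᵥ u))⁻¹ • vecMulVec (H *ᵥ u) (w ᵥ* H)

theorem vecMul_abaffianUpdate (H : Matrix κ ι K) (u : ι → K) (w x : κ → K) :
    x ᵥ* abaffianUpdate H u w =
      x ᵥ* H - ((w ⬝ᵥ (H *ᵥ u))⁻¹ * (x ⬝ᵥ (H *ᵥ u))) • (w ᵥ* H) := by
  rw [abaffianUpdate, vecMul_sub, vecMul_smul, vecMul_vecMulVec, smul_smul]

theorem vecMul_abaffianUpdate_self {H : Matrix κ ι K} {u : ι → K} {w : κ → K}
    (hden : w ⬝ᵥ (H *ᵥ u) ≠ 0) : w ᵥ* abaffianUpdate H u w = 0 := by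
  rw [vecMul_abaffianUpdate, inv_mul_cancel₀ hden, one_smul, sub_self]

theorem vecMul_abaffianUpdate_eq_zero {H : Matrix κ ι K} {x : κ → K} (hx : x ᵥ* H = 0)
    (u : ι → K) (w : κ → K) : x ᵥ* abaffianUpdate H u w = 0 := by
  rw [vecMul_abaffianUpdate, dotProduct_mulVec x, hx, zero_dotProduct, mul_zero, zero_smul,
    sub_zero]

theorem abaffian_transpose_annihilates_w_general {m : ℕ} {H : ℕ → Matrix κ ι K}
    {u : Fin m → ι → K} {w : Fin m → κ → K}
    (hden : ∀ i : Fin m, w i ⬝ᵥ (H i *ᵥ u i) ≠ 0)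
    (hH : ∀ i : Fin m, H (i + 1) = abaffianUpdate (H i) (u i) (w i))
    {j i : Fin m} (hji : j ≤ i) : (H (i + 1))ᵀ *ᵥ w j = 0 := by
  rw [mulVec_transpose]
  obtain ⟨i, hi⟩ := i
  replace hji : (j : ℕ) ≤ i := hji
  induction i, hji using Nat.le_induction with
  | base =>
    rw [hH j]
    exact vecMul_abaffianUpdate_self (hden j)
  | succ i _ ih =>
    rw [hH ⟨i + 1, hi⟩]
    exact vecMul_abaffianUpdate_eq_zero (ih (Nat.lt_of_succ_lt hi)) _ _

end AbaffianUpdate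

/-- Under the Abaffian recursion (with `H 0 = H₁`), for all `j ≤ i` one has
`H_{i+1}ᵀ wⱼ = 0`: the vectors `w₁,…,w_i` lie in the null space of the transpose
of the `(i+1)`-st Abaffian. -/
theorem abaffian_transpose_annihilates_w
    (m n : ℕ) (hmn : m ≤ n)
    (A : Matrix (Fin m) (Fin n) ℝ)
    (H : ℕ → Matrix (Fin n) (Fin n) ℝ)
    (v : Fin m → Fin m → ℝ) (w : Fin m → Fin n → ℝ)
    (hH0 : IsUnit (H 0).det)
    (hHden : ∀ i : Fin m, w i ⬝ᵥ (H ↑i *ᵥ (Aᵀ *ᵥ v i)) ≠ 0)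
    (hH : ∀ i : Fin m,
      H (↑i + 1) = H ↑i -
        (w i ⬝ᵥ (H ↑i *ᵥ (Aᵀ *ᵥ v i)))⁻¹ •
          vecMulVec (H ↑i *ᵥ (Aᵀ *ᵥ v i)) (w i ᵥ* H ↑i)) :
    ∀ j i : Fin m, j ≤ i → (H (↑i + 1))ᵀ *ᵥ w j = 0 :=
  fun _ _ hji => abaffian_transpose_annihilates_w_general hHden hH hji
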